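/- Let H be a real Hilbert space, let C ⊆ H be a nonempty closed convex set, and let B : H → H be β-cocoercive for some β > 0. Suppose the solution set Ω := {x* ∈ C | ∀ y ∈ C, ⟨B x*, y − x*⟩ ≥ 0} of the variational inequality problem is nonempty. Assume the variable-metric hypotheses of the context: operators U_k, V_k with ⟨U_k x, x⟩ ≥ α‖x‖² (α > 0), V_k∘U_k = U_k∘V_k = id, ‖U_k‖ ≤ μ, (1 + η_k)⟨U_{k+1}x, x⟩ ≥ ⟨U_k x, x⟩ with η_k ≥ 0 summable; parameters γ_k ∈ (0, 2β/‖U_k‖), α_k := 2β/(4β − γ_k‖U_k‖), λ_k with λ̲ ≤ λ_k ≤ 1/α_k − τ (λ̲, τ > 0) and γ_k ≥ γ̲ > 0; errors a_k, b_k with ∑_k λ_k‖a_k‖ < ∞, ∑_k λ_k‖b_k‖ < ∞; and projection maps P_k : H → H satisfying, for every y ∈ H, P_k y ∈ C and ⟨V_k(y − P_k y), z − P_k y⟩ ≤ 0 for all z ∈ C. Define from x_0 ∈ H the iteration x_{k+1} = x_k + λ_k·(P_k(x_k − γ_k·U_k(B x_k + b_k)) + a_k − x_k). Then there exists p ∈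 Ω such that x_k converges weakly to p, i.e., ⟨x_k, y⟩ → ⟨p, y⟩ for every y ∈ H. -/

import Mathlib

open RealInnerProductSpace Filter

/-!
A relaxed forward-backward step from `x k` decreases the distance to every solution, measured in
the metric of `V k = (U k)⁻¹`, by a multiple of the squared residual `x k - t k`, where `t k` is
the exact projected point: cocoercivity absorbs the gradient term. The metrics are almost
decreasing and the errors summable, so by a Robbins-Siegmund argument the distances to each
solution converge and `x k - t k → 0`. Hence weak cluster points of `x` satisfy Minty's form of
the variational inequality and are solutions. They all coincide, by Opial's argument: for two
solutions `p` and `q` the cross term `⟪x k - p, V k (p - q)⟫` converges, and `V k (p - q)` converges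
strongly by Vigier's theorem on monotone sequences of positive operators.
-/

section RealSequences

variable {u η d δ : ℕ → ℝ}

theorem summable_mul_of_summable {f g : ℕ → ℝ} (hf : Summable f) (hg : Summable g) :
    Summable fun k ↦ f k * g k :=
  hf.norm.mul_tendsto_const hg.tendsto_cofinite_zero

theorem bddAbove_range_of_succ_le_one_add_mul_add (hu₀ : 0 ≤ u 0)
    (hη₀ : ∀ k, 0 ≤ η k) (hη : Summable η) (hδ₀ : ∀ k, 0 ≤ δ k) (hδ : Summable δ)
    (h : ∀ k, u (k + 1) ≤ (1 + η k) * u k + δ k) : BddAbove (Set.range u) := by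
  refine ⟨(u 0 + ∑' k, δ k) * Real.exp (∑' k, η k), ?_⟩
  rintro _ ⟨k, rfl⟩
  have hδ_sum := hδ.sum_le_tsum (Finset.Ico 0 k) fun i _ ↦ hδ₀ i
  have hη_sum := hη.sum_le_tsum (Finset.Ico 0 k) fun i _ ↦ hη₀ i
  have hδ_tsum : 0 ≤ ∑' k, δ k := tsum_nonneg hδ₀
  calc u k ≤ (u 0 + ∑ i ∈ Finset.Ico 0 k, δ i) * Real.exp (∑ i ∈ Finset.Ico 0 k, η i) :=
        discrete_gronwall hu₀ (fun n _ ↦ h n) (fun n _ ↦ hη₀ n) (fun n _ ↦ hδ₀ n) k.zero_le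
    _ ≤ _ := by gcongr

theorem exists_tendsto_and_summable_of_succ_add_le_add (hu : ∀ k, 0 ≤ u k) (hd : ∀ k, 0 ≤ d k)
    (hδ : Summable δ) (h : ∀ k, u (k + 1) + d k ≤ u k + δ k) :
    (∃ l, Tendsto u atTop (nhds l)) ∧ Summable d := by
  let v : ℕ → ℝ := fun k ↦ u k + ∑ i ∈ Finset.range k, d i - ∑ i ∈ Finset.range k, δ i
  have hv : Antitone v := antitone_nat_of_succ_le fun k ↦ by
    simp only [v, Finset.sum_range_succ]
    linarith [h k]
  obtain ⟨D, hD⟩ := hδ.hasSum.tendsto_sum_nat.bddAbove_range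
  have hδD (k : ℕ) : ∑ i ∈ Finset.range k, δ i ≤ D := hD ⟨k, rfl⟩
  have hd_sum : Summable d := summable_of_sum_range_le (c := v 0 + D) hd fun k ↦ by
    linarith [hv k.zero_le, hu k, hδD k]
  have hv_bdd : BddBelow (Set.range v) := ⟨-D, by
    rintro _ ⟨k, rfl⟩
    linarith [hu k, hδD k, Finset.sum_nonneg fun i (_ : i ∈ Finset.range k) ↦ hd i]⟩
  refine ⟨⟨_, (((tendsto_atTop_ciInf hv hv_bdd).sub hd_sum.hasSum.tendsto_sum_nat).add
    hδ.hasSum.tendsto_sum_nat).congr fun k ↦ ?_⟩, hd_sum⟩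
  simp only [v]
  ring

theorem exists_tendsto_and_summable_of_succ_add_le_one_add_mul_add
    (hu : ∀ k, 0 ≤ u k) (hη₀ : ∀ k, 0 ≤ η k) (hη : Summable η) (hd : ∀ k, 0 ≤ d k)
    (hδ₀ : ∀ k, 0 ≤ δ k) (hδ : Summable δ)
    (h : ∀ k, u (k + 1) + d k ≤ (1 + η k) * u k + δ k) :
    (∃ l, Tendsto u atTop (nhds l)) ∧ Summable d := by
  obtain ⟨R, hR⟩ := bddAbove_range_of_succ_le_one_add_mul_add (hu 0) hη₀ hη hδ₀ hδ
    fun k ↦ by linarith [h k, hd k]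
  refine exists_tendsto_and_summable_of_succ_add_le_add hu hd ((hη.mul_right R).add hδ)
    fun k ↦ ?_
  have : η k * u k ≤ η k * R := mul_le_mul_of_nonneg_left (hR ⟨k, rfl⟩) (hη₀ k)
  linarith [h k]

end RealSequences

section PositiveOperators

variable {H : Type*} [NormedAddCommGroup H] [InnerProductSpace ℝ H] {T U U' V V' : H →L[ℝ] H}

theorem inner_apply_self_le_opNorm_mul (T : H →L[ℝ] H) (u : H) : ⟪T u, u⟫ ≤ ‖T‖ * ‖u‖ ^ 2 :=
  calc ⟪T u, u⟫ ≤ ‖T u‖ * ‖u‖ := real_inner_le_norm _ _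
    _ ≤ ‖T‖ * ‖u‖ * ‖u‖ := by gcongr; exact T.le_opNorm u
    _ = ‖T‖ * ‖u‖ ^ 2 := by ring

theorem inner_apply_sq_le_of_isPositive (hT : T.IsPositive) (u v : H) :
    ⟪T u, v⟫ ^ 2 ≤ ⟪T u, u⟫ * ⟪T v, v⟫ :=
  LinearMap.BilinForm.apply_sq_le_of_symm (innerₗ H ∘ₗ T.toLinearMap) hT.inner_nonneg_left
    ⟨fun x y ↦ by simpa [real_inner_comm] using (hT.inner_left_eq_inner_right x y)⟩ u v

theorem norm_apply_sq_le_mul_inner_of_isPositive (hT : T.IsPositive) {K : ℝ}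
    (hK : ∀ u, ⟪T u, u⟫ ≤ K * ‖u‖ ^ 2) (u : H) : ‖T u‖ ^ 2 ≤ K * ⟪T u, u⟫ := by
  rcases eq_or_ne (T u) 0 with h | h
  · simp [h]
  refine le_of_mul_le_mul_right ?_ (pow_pos (norm_pos_iff.2 h) 2)
  calc ‖T u‖ ^ 2 * ‖T u‖ ^ 2 = ⟪T u, T u⟫ ^ 2 := by
        rw [real_inner_self_eq_norm_sq]; ring
    _ ≤ ⟪T u, u⟫ * ⟪T (T u), T u⟫ := inner_apply_sq_le_of_isPositive hT u (T u)
    _ ≤ ⟪T u, u⟫ * (K * ‖T u‖ ^ 2) := by gcongr; exacts [hT.inner_nonneg_left u, hK _]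
    _ = K * ⟪T u, u⟫ * ‖T u‖ ^ 2 := by ring

theorem inner_apply_add_smul (hT : T.IsPositive) (u v : H) (c : ℝ) :
    ⟪T (u + c • v), u + c • v⟫ = ⟪T u, u⟫ + 2 * c * ⟪T u, v⟫ + c ^ 2 * ⟪T v, v⟫ := by
  have : ⟪T v, u⟫ = ⟪T u, v⟫ := by rw [hT.inner_left_eq_inner_right, real_inner_comm]
  simp only [map_add, map_smul, inner_add_left, inner_add_right, real_inner_smul_left,
    real_inner_smul_right, this]
  ring

theorem inner_apply_add_le (hT : T.IsPositive) {M : ℝ} (hM : ‖T‖ ≤ M) (u e : H) :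
    ⟪T (u + e), u + e⟫ ≤ (1 + M * ‖e‖) * ⟪T u, u⟫ + (‖e‖ + M * ‖e‖ ^ 2) := by
  have hK (v : H) : ⟪T v, v⟫ ≤ M * ‖v‖ ^ 2 :=
    (inner_apply_self_le_opNorm_mul T v).trans (by gcongr)
  have hcross : 2 * ⟪T u, e⟫ ≤ ‖e‖ * (M * ⟪T u, u⟫ + 1) :=
    calc 2 * ⟪T u, e⟫ ≤ ‖e‖ * (2 * ‖T u‖) := by linarith [real_inner_le_norm (T u) e]
      _ ≤ ‖e‖ * (‖T u‖ ^ 2 + 1) := by gcongr; linarith [two_mul_le_add_sq ‖T u‖ 1]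
      _ ≤ ‖e‖ * (M * ⟪T u, u⟫ + 1) := by
        gcongr; exact norm_apply_sq_le_mul_inner_of_isPositive hT hK u
  have hexpand := inner_apply_add_smul hT u e 1
  rw [one_smul] at hexpand
  linarith [hK e]

theorem isPositive_of_rightInverse (hU : U.IsPositive) (hUV : Function.RightInverse V U) :
    V.IsPositive := by
  have hsymm (u v : H) : ⟪V u, v⟫ = ⟪u, V v⟫ := by
    conv_lhs => rw [← hUV v, ← hU.inner_left_eq_inner_right, hUV u]
  refine (ContinuousLinearMap.isPositive_iff V).2 ⟨hsymm, fun u ↦ ?_⟩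
  simpa only [hUV u] using hU.inner_nonneg_right (V u)

theorem norm_sq_le_opNorm_mul_inner_of_rightInverse (hU : U.IsPositive)
    (hUV : Function.RightInverse V U) (u : H) : ‖u‖ ^ 2 ≤ ‖U‖ * ⟪V u, u⟫ := by
  simpa only [hUV u, real_inner_comm] using
    norm_apply_sq_le_mul_inner_of_isPositive hU (inner_apply_self_le_opNorm_mul U) (V u)

theorem opNorm_le_inv_of_rightInverse {α : ℝ} (hα : 0 < α)
    (hU : ∀ u, α * ‖u‖ ^ 2 ≤ ⟪U u, u⟫) (hUV : Function.RightInverse V U) : ‖V‖ ≤ α⁻¹ := by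
  refine V.opNorm_le_bound (inv_nonneg.2 hα.le) fun u ↦ ?_
  rw [le_inv_mul_iff₀ hα]
  rcases (norm_nonneg (V u)).eq_or_lt with h | h
  · simp [← h]
  refine le_of_mul_le_mul_right ?_ h
  calc α * ‖V u‖ * ‖V u‖ = α * ‖V u‖ ^ 2 := by ring
    _ ≤ ⟪u, V u⟫ := by simpa only [hUV u] using hU (V u)
    _ ≤ ‖u‖ * ‖V u‖ := real_inner_le_norm _ _

theorem inner_apply_self_le_of_rightInverse (hU : U.IsPositive)
    (hUV : Function.RightInverse V U) (hUV' : Function.RightInverse V' U') {c : ℝ} (hc : 0 < c)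
    (h : ∀ u, ⟪U u, u⟫ ≤ c * ⟪U' u, u⟫) (u : H) : ⟪V' u, u⟫ ≤ c * ⟪V u, u⟫ := by
  have hsq : 0 ≤ ⟪U (V' u + (-c) • V u), V' u + (-c) • V u⟫ := hU.inner_nonneg_left _
  have hV' : ⟪U (V' u), V' u⟫ ≤ c * ⟪V' u, u⟫ := by
    simpa only [hUV' u, real_inner_comm] using h (V' u)
  have hcross : ⟪U (V' u), V u⟫ = ⟪V' u, u⟫ := by
    rw [hU.inner_left_eq_inner_right, hUV u]
  rw [inner_apply_add_smul hU, hcross, hUV u, real_inner_comm (V u) u] at hsq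
  refine le_of_mul_le_mul_left ?_ hc
  linarith

theorem exists_tendsto_apply_of_antitone [CompleteSpace H] {T : ℕ → H →L[ℝ] H}
    (hT : Antitone T) (hpos : ∀ k, (T k).IsPositive) (u : H) :
    ∃ w, Tendsto (fun k ↦ T k u) atTop (nhds w) := by
  have hanti (v : H) : Antitone fun k ↦ ⟪T k v, v⟫ := fun m n hmn ↦ by
    simpa [inner_sub_left] using
      ((ContinuousLinearMap.le_def _ _).1 (hT hmn)).inner_nonneg_left v
  have hdiff (m n : ℕ) (hmn : m ≤ n) :
      ‖T m u - T n u‖ ^ 2 ≤ ‖T 0‖ * (⟪T m u, u⟫ - ⟪T n u, u⟫) := by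
    have hK (v : H) : ⟪(T m - T n) v, v⟫ ≤ ‖T 0‖ * ‖v‖ ^ 2 := by
      have h0m : ⟪T m v, v⟫ ≤ ⟪T 0 v, v⟫ := hanti v m.zero_le
      rw [sub_apply, inner_sub_left]
      linarith [(hpos n).inner_nonneg_left v, inner_apply_self_le_opNorm_mul (T 0) v]
    simpa [inner_sub_left] using
      norm_apply_sq_le_mul_inner_of_isPositive ((ContinuousLinearMap.le_def _ _).1 (hT hmn)) hK u
  have hconv := tendsto_atTop_ciInf (hanti u)
    ⟨0, by rintro _ ⟨k, rfl⟩; exact (hpos k).inner_nonneg_left u⟩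
  set q := ⨅ k, ⟪T k u, u⟫
  have hq (n : ℕ) : q ≤ ⟪T n u, u⟫ := (hanti u).le_of_tendsto hconv n
  have hbound : Tendsto (fun m ↦ √(‖T 0‖ * (⟪T m u, u⟫ - q))) atTop (nhds 0) := by
    simpa using ((hconv.sub_const q).const_mul ‖T 0‖).sqrt
  refine cauchySeq_tendsto_of_complete (cauchySeq_of_le_tendsto_0' _ (fun m n hmn ↦ ?_) hbound)
  rw [dist_eq_norm]
  exact Real.le_sqrt_of_sq_le ((hdiff m n hmn).trans (by gcongr; exact hq n))

end PositiveOperators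

section WeakConvergence

variable {ι H : Type*} [NormedAddCommGroup H] [InnerProductSpace ℝ H]

/-- Weak convergence of `x` to `p` along the filter `l`, expressed by testing against the inner
product with every vector. -/
def TendstoWeakly (x : ι → H) (l : Filter ι) (p : H) : Prop :=
  ∀ y : H, Tendsto (fun k ↦ ⟪x k, y⟫) l (nhds ⟪p, y⟫)

namespace TendstoWeakly

variable {x t w : ι → H} {l : Filter ι} {p w₀ : H}

theorem tendsto_inner (hx : TendstoWeakly x l p) {R : ℝ} (hR : ∀ k, ‖x k‖ ≤ R)
    (hw : Tendsto w l (nhds w₀)) : Tendsto (fun k ↦ ⟪x k, w k⟫) l (nhds ⟪p, w₀⟫) := by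
  have hdiff : Tendsto (fun k ↦ ⟪x k, w k - w₀⟫) l (nhds 0) := by
    refine squeeze_zero_norm (a := fun k ↦ R * ‖w k - w₀‖) (fun k ↦ ?_) ?_
    · exact (norm_inner_le_norm _ _).trans (by gcongr; exact hR k)
    · simpa using (tendsto_iff_norm_sub_tendsto_zero.1 hw).const_mul R
  simpa [inner_sub_right] using hdiff.add (hx w₀)

theorem of_tendsto_sub (hx : TendstoWeakly x l p)
    (hxt : Tendsto (fun k ↦ x k - t k) l (nhds 0)) : TendstoWeakly t l p := fun y ↦ by
  simpa [inner_sub_left] using (hx y).sub (hxt.inner (tendsto_const_nhds (x := y)))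

theorem mem_of_isClosed_of_convex [CompleteSpace H] [l.NeBot] {C : Set H} (hC : IsClosed C)
    (hC' : Convex ℝ C) (hxC : ∀ k, x k ∈ C) (hx : TendstoWeakly x l p) : p ∈ C := by
  by_contra hp
  obtain ⟨f, c, hfC, hfp⟩ := geometric_hahn_banach_closed_point hC' hC hp
  have hf (v : H) : f v = ⟪v, (InnerProductSpace.toDual ℝ H).symm f⟫ := by
    rw [real_inner_comm, InnerProductSpace.toDual_symm_apply]
  have hlim : Tendsto (fun k ↦ f (x k)) l (nhds (f p)) := by
    simpa only [hf] using hx ((InnerProductSpace.toDual ℝ H).symm f)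
  exact hfp.not_ge (le_of_tendsto' hlim fun k ↦ (hfC _ (hxC k)).le)

end TendstoWeakly

theorem exists_tendstoWeakly_ultrafilter [CompleteSpace H] {x : ι → H} {R : ℝ}
    (hR : ∀ k, ‖x k‖ ≤ R) (F : Ultrafilter ι) : ∃ p, TendstoWeakly x F p := by
  let f (k : ι) : WeakDual ℝ H := StrongDual.toWeakDual (InnerProductSpace.toDual ℝ H (x k))
  have hf (k : ι) : f k ∈ WeakDual.toStrongDual ⁻¹' Metric.closedBall (0 : StrongDual ℝ H) R := by
    simpa [f] using hR k
  obtain ⟨g, -, hg⟩ := (WeakDual.isCompact_closedBall (0 : StrongDual ℝ H) R).ultrafilter_le_nhds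
    (F.map f) (le_principal_iff.2 (Filter.mem_map.2 (univ_mem' hf)))
  refine ⟨(InnerProductSpace.toDual ℝ H).symm (WeakDual.toStrongDual g), fun y ↦ ?_⟩
  rw [InnerProductSpace.toDual_symm_apply]
  exact ((WeakDual.eval_continuous y).tendsto g).comp hg

end WeakConvergence

section VariableMetric

variable {H : Type*} [NormedAddCommGroup H] [InnerProductSpace ℝ H]

/-- A sequence of uniformly equivalent metrics `⟪V k u, u⟫`, bounded above by `M * ‖u‖ ^ 2` and
below by `μ⁻¹ * ‖u‖ ^ 2`, that is decreasing up to the factors `1 + η k` with `∑ η k < ∞`. -/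
structure IsVariableMetric (V : ℕ → H →L[ℝ] H) (M μ : ℝ) (η : ℕ → ℝ) : Prop where
  isPositive : ∀ k, (V k).IsPositive
  norm_le : ∀ k, ‖V k‖ ≤ M
  norm_sq_le : ∀ k u, ‖u‖ ^ 2 ≤ μ * ⟪V k u, u⟫
  inner_succ_le : ∀ k u, ⟪V (k + 1) u, u⟫ ≤ (1 + η k) * ⟪V k u, u⟫
  nonneg : ∀ k, 0 ≤ η k
  summable : Summable η

namespace IsVariableMetric

variable {V : ℕ → H →L[ℝ] H} {M μ : ℝ} {η : ℕ → ℝ}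

theorem inner_apply_self_le (hV : IsVariableMetric V M μ η) (k : ℕ) (u : H) :
    ⟪V k u, u⟫ ≤ M * ‖u‖ ^ 2 :=
  (inner_apply_self_le_opNorm_mul (V k) u).trans (by gcongr; exact hV.norm_le k)

theorem exists_tendsto_apply [CompleteSpace H] (hV : IsVariableMetric V M μ η) (u : H) :
    ∃ w, Tendsto (fun k ↦ V k u) atTop (nhds w) := by
  have hM : 0 ≤ M := (norm_nonneg _).trans (hV.norm_le 0)
  let tail (k : ℕ) : ℝ := M * ∑' i, η (i + k)
  have htail (k : ℕ) : tail k = M * η k + tail (k + 1) := by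
    simp only [tail, ((summable_nat_add_iff k).2 hV.summable).tsum_eq_zero_add, zero_add, mul_add,
      add_assoc, add_comm 1 k]
  -- Adding the tails of `M * ∑ η` makes the metrics genuinely antitone.
  let T (k : ℕ) : H →L[ℝ] H := V k + tail k • 1
  have hT_apply (k : ℕ) (v : H) : T k v = V k v + tail k • v := rfl
  have hT_pos (k : ℕ) : (T k).IsPositive :=
    (hV.isPositive k).add (ContinuousLinearMap.isPositive_one.smul_of_nonneg
      (mul_nonneg hM (tsum_nonneg fun i ↦ hV.nonneg (i + k))))
  have hT_anti : Antitone T := antitone_nat_of_succ_le fun k ↦ by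
    refine (ContinuousLinearMap.le_def _ _).2 ((ContinuousLinearMap.isPositive_iff _).2
      ⟨(hT_pos k).isSymmetric.sub (hT_pos (k + 1)).isSymmetric, fun v ↦ ?_⟩)
    have hηv := mul_le_mul_of_nonneg_left (hV.inner_apply_self_le k v) (hV.nonneg k)
    simp only [sub_apply, hT_apply, inner_sub_left, inner_add_left,
      real_inner_smul_left, real_inner_self_eq_norm_sq, htail k]
    linarith [hV.inner_succ_le k v]
  obtain ⟨w, hw⟩ := exists_tendsto_apply_of_antitone hT_anti hT_pos u
  have htail_lim : Tendsto tail atTop (nhds 0) := by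
    simpa using (tendsto_sum_nat_add η).const_mul M
  exact ⟨_, (hw.sub (htail_lim.smul_const u)).congr fun k ↦ by simp [hT_apply]⟩

theorem exists_norm_le (hV : IsVariableMetric V M μ η) {x : ℕ → H} {z : H} {l : ℝ}
    (h : Tendsto (fun k ↦ ⟪V k (x k - z), x k - z⟫) atTop (nhds l)) : ∃ R, ∀ k, ‖x k‖ ≤ R := by
  obtain ⟨D, hD⟩ := (h.const_mul μ).bddAbove_range
  refine ⟨√D + ‖z‖, fun k ↦ ?_⟩
  have hsub : ‖x k - z‖ ≤ √D :=
    Real.le_sqrt_of_sq_le ((hV.norm_sq_le k _).trans (hD ⟨k, rfl⟩))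
  linarith [norm_le_norm_sub_add (x k) z]

theorem tendsto_zero (hV : IsVariableMetric V M μ η) {w : ℕ → H}
    (h : Tendsto (fun k ↦ ⟪V k (w k), w k⟫) atTop (nhds 0)) : Tendsto w atTop (nhds 0) := by
  refine squeeze_zero_norm (fun k ↦ Real.le_sqrt_of_sq_le (hV.norm_sq_le k (w k))) ?_
  simpa using (h.const_mul μ).sqrt

theorem exists_tendsto_and_summable (hV : IsVariableMetric V M μ η) {y v e : ℕ → H} {d : ℕ → ℝ}
    (hd : ∀ k, 0 ≤ d k) (he : Summable fun k ↦ ‖e k‖) (hy : ∀ k, y (k + 1) = v k + e k)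
    (hv : ∀ k, ⟪V k (v k), v k⟫ + d k ≤ ⟪V k (y k), y k⟫) :
    (∃ l, Tendsto (fun k ↦ ⟪V k (y k), y k⟫) atTop (nhds l)) ∧ Summable d := by
  have hM : 0 ≤ M := (norm_nonneg _).trans (hV.norm_le 0)
  have hη := hV.nonneg
  have hηe : Summable fun k ↦ η k * (M * ‖e k‖) :=
    summable_mul_of_summable hV.summable (he.mul_left M)
  have hδ' : Summable fun k ↦ ‖e k‖ + M * ‖e k‖ ^ 2 := by
    simpa only [sq] using he.add ((summable_mul_of_summable he he).mul_left M)
  have hδ : Summable fun k ↦ (1 + η k) * (‖e k‖ + M * ‖e k‖ ^ 2) := by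
    simpa only [one_add_mul] using hδ'.add (summable_mul_of_summable hV.summable hδ')
  refine exists_tendsto_and_summable_of_succ_add_le_one_add_mul_add
    (η := fun k ↦ η k + M * ‖e k‖ + η k * (M * ‖e k‖))
    (fun k ↦ (hV.isPositive k).inner_nonneg_left _)
    (fun k ↦ by have := hη k; positivity) ((hV.summable.add (he.mul_left M)).add hηe) hd
    (fun k ↦ by have := hη k; positivity) hδ fun k ↦ ?_
  have hfactor : 1 ≤ (1 + η k) * (1 + M * ‖e k‖) :=
    one_le_mul_of_one_le_of_one_le (by linarith [hη k])
      (by linarith [mul_nonneg hM (norm_nonneg (e k))])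
  calc ⟪V (k + 1) (y (k + 1)), y (k + 1)⟫ + d k
      ≤ (1 + η k) * ⟪V k (v k + e k), v k + e k⟫ + d k := by
        rw [hy]; gcongr; exact hV.inner_succ_le k _
    _ ≤ (1 + η k) * ((1 + M * ‖e k‖) * ⟪V k (v k), v k⟫ + (‖e k‖ + M * ‖e k‖ ^ 2)) + d k := by
        gcongr
        · linarith [hη k]
        · exact inner_apply_add_le (hV.isPositive k) (hV.norm_le k) _ _
    _ ≤ (1 + η k) * (1 + M * ‖e k‖) * (⟪V k (v k), v k⟫ + d k)
          + (1 + η k) * (‖e k‖ + M * ‖e k‖ ^ 2) := by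
        linarith [le_mul_of_one_le_left (hd k) hfactor]
    _ ≤ (1 + η k) * (1 + M * ‖e k‖) * ⟪V k (y k), y k⟫
          + (1 + η k) * (‖e k‖ + M * ‖e k‖ ^ 2) := by
        gcongr; exact hv k
    _ = _ := by ring

section Opial

variable [CompleteSpace H] {x : ℕ → H} {p q : H}

theorem eq_of_tendstoWeakly (hV : IsVariableMetric V M μ η) {R : ℝ} (hR : ∀ k, ‖x k‖ ≤ R)
    {l l' : ℝ} (hp : Tendsto (fun k ↦ ⟪V k (x k - p), x k - p⟫) atTop (nhds l))
    (hq : Tendsto (fun k ↦ ⟪V k (x k - q), x k - q⟫) atTop (nhds l'))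
    {F G : Filter ℕ} [F.NeBot] [G.NeBot] (hF : F ≤ atTop) (hG : G ≤ atTop)
    (hxp : TendstoWeakly x F p) (hxq : TendstoWeakly x G q) : p = q := by
  obtain ⟨w, hw⟩ := hV.exists_tendsto_apply (p - q)
  have hpq : Tendsto (fun k ↦ ⟪V k (p - q), p - q⟫) atTop (nhds ⟪w, p - q⟫) :=
    hw.inner tendsto_const_nhds
  have hcross : Tendsto (fun k ↦ ⟪x k - p, V k (p - q)⟫) atTop
      (nhds ((l' - l - ⟪w, p - q⟫) / 2)) := by
    refine (((hq.sub hp).sub hpq).div_const 2).congr fun k ↦ ?_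
    have hexpand := inner_apply_add_smul (hV.isPositive k) (x k - p) (p - q) 1
    rw [one_smul, sub_add_sub_cancel, (hV.isPositive k).inner_left_eq_inner_right _ (p - q)]
      at hexpand
    rw [hexpand]
    ring
  have hcross_of {E : Filter ℕ} [E.NeBot] (hE : E ≤ atTop) {r : H} (hr : TendstoWeakly x E r) :
      ⟪r - p, w⟫ = (l' - l - ⟪w, p - q⟫) / 2 := by
    refine tendsto_nhds_unique ?_ (hcross.mono_left hE)
    simp only [inner_sub_left]
    exact (hr.tendsto_inner hR (hw.mono_left hE)).sub
      (tendsto_const_nhds.inner (hw.mono_left hE))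
  have hzero : ⟪w, p - q⟫ = 0 := by
    have h := (hcross_of hF hxp).trans (hcross_of hG hxq).symm
    rw [sub_self, inner_zero_left, ← neg_sub p q, inner_neg_left, real_inner_comm] at h
    linarith
  have hnorm : ‖p - q‖ ^ 2 ≤ μ * ⟪w, p - q⟫ :=
    ge_of_tendsto' (hpq.const_mul μ) fun k ↦ hV.norm_sq_le k (p - q)
  rw [hzero, mul_zero] at hnorm
  exact sub_eq_zero.1 (norm_eq_zero.1 (pow_eq_zero_iff two_ne_zero |>.1
    (le_antisymm hnorm (sq_nonneg _))))

theorem exists_mem_tendstoWeakly (hV : IsVariableMetric V M μ η) {S : Set H} (hS : S.Nonempty)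
    (hconv : ∀ z ∈ S, ∃ l, Tendsto (fun k ↦ ⟪V k (x k - z), x k - z⟫) atTop (nhds l))
    (hcluster : ∀ (F : Ultrafilter ℕ) (p : H), ↑F ≤ (atTop : Filter ℕ) →
      TendstoWeakly x F p → p ∈ S) :
    ∃ p ∈ S, TendstoWeakly x atTop p := by
  obtain ⟨z, hz⟩ := hS
  obtain ⟨_, hz_lim⟩ := hconv z hz
  obtain ⟨R, hR⟩ := hV.exists_norm_le hz_lim
  obtain ⟨p, hp⟩ := exists_tendstoWeakly_ultrafilter hR (Ultrafilter.of atTop)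
  have hpS : p ∈ S := hcluster _ p (Ultrafilter.of_le _) hp
  refine ⟨p, hpS, fun y ↦ (tendsto_iff_ultrafilter _ _ _).2 fun F hF ↦ ?_⟩
  obtain ⟨q, hq⟩ := exists_tendstoWeakly_ultrafilter hR F
  obtain ⟨_, hp_lim⟩ := hconv p hpS
  obtain ⟨_, hq_lim⟩ := hconv q (hcluster F q hF hq)
  rw [hV.eq_of_tendstoWeakly hR hp_lim hq_lim (Ultrafilter.of_le _) hF hp hq]
  exact hq y

end Opial

end IsVariableMetric

theorem isVariableMetric_of_rightInverse {U V : ℕ → H →L[ℝ] H} {α μ : ℝ} {η : ℕ → ℝ}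
    (hα : 0 < α) (hU : ∀ k, (U k).IsPositive) (hUpos : ∀ k u, α * ‖u‖ ^ 2 ≤ ⟪U k u, u⟫)
    (hUV : ∀ k, Function.RightInverse (V k) (U k)) (hUnorm : ∀ k, ‖U k‖ ≤ μ)
    (hη₀ : ∀ k, 0 ≤ η k) (hη : Summable η)
    (hUmono : ∀ k u, ⟪U k u, u⟫ ≤ (1 + η k) * ⟪U (k + 1) u, u⟫) :
    IsVariableMetric V α⁻¹ μ η where
  isPositive k := isPositive_of_rightInverse (hU k) (hUV k)
  norm_le k := opNorm_le_inv_of_rightInverse hα (hUpos k) (hUV k)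
  norm_sq_le k u := (norm_sq_le_opNorm_mul_inner_of_rightInverse (hU k) (hUV k) u).trans
    (mul_le_mul_of_nonneg_right (hUnorm k)
      ((isPositive_of_rightInverse (hU k) (hUV k)).inner_nonneg_left u))
  inner_succ_le k := inner_apply_self_le_of_rightInverse (hU k) (hUV k) (hUV (k + 1))
    (by linarith [hη₀ k]) (hUmono k)
  nonneg := hη₀
  summable := hη

end VariableMetric

section VariationalInequality

variable {H : Type*} [NormedAddCommGroup H] [InnerProductSpace ℝ H]

/-- `B` is `β`-cocoercive (the inverse of `B` is `β`-strongly monotone). -/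
def IsCocoercive (β : ℝ) (B : H → H) : Prop :=
  ∀ x y : H, β * ‖B x - B y‖ ^ 2 ≤ ⟪x - y, B x - B y⟫

/-- The solutions in `C` of the variational inequality problem `VIP(B, C)`. -/
def vipSolutions (B : H → H) (C : Set H) : Set H :=
  {p | p ∈ C ∧ ∀ y ∈ C, 0 ≤ ⟪B p, y - p⟫}

/-- `p` is the projection of `y` onto `C` in the metric `⟪V u, u⟫`, encoded by its variational
characterization, so that the relation makes sense for any set `C` and any operator `V`. -/
def IsMetricProj (V : H →L[ℝ] H) (C : Set H) (y p : H) : Prop :=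
  p ∈ C ∧ ∀ z ∈ C, ⟪V (y - p), z - p⟫ ≤ 0

/-- `t` is the result of an exact forward-backward step of size `γ` from `y`, i.e. the projection
of `y - γ • V⁻¹ (B y)` onto `C` in the metric of `V`, encoded without inverting `V`. -/
def IsForwardBackwardPoint (V : H →L[ℝ] H) (B : H → H) (C : Set H) (γ : ℝ) (y t : H) : Prop :=
  t ∈ C ∧ ∀ z ∈ C, ⟪V (y - t), z - t⟫ ≤ γ * ⟪B y, z - t⟫

variable {β γ : ℝ} {B : H → H} {C : Set H} {U V : H →L[ℝ] H} {p t y y' z : H}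

namespace IsCocoercive

theorem inner_le_inner (hB : IsCocoercive β B) (hβ : 0 ≤ β) (x y : H) :
    ⟪B x, y - x⟫ ≤ ⟪B y, y - x⟫ := by
  rw [← sub_nonneg, ← inner_sub_left, real_inner_comm]
  exact (by positivity : 0 ≤ β * ‖B y - B x‖ ^ 2).trans (hB y x)

theorem norm_sub_le (hB : IsCocoercive β B) (hβ : 0 < β) (x y : H) :
    ‖B x - B y‖ ≤ β⁻¹ * ‖x - y‖ := by
  rw [le_inv_mul_iff₀ hβ]
  rcases (norm_nonneg (B x - B y)).eq_or_lt with h | h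
  · simp [← h]
  refine le_of_mul_le_mul_right ?_ h
  calc β * ‖B x - B y‖ * ‖B x - B y‖ = β * ‖B x - B y‖ ^ 2 := by ring
    _ ≤ ⟪x - y, B x - B y⟫ := hB x y
    _ ≤ ‖x - y‖ * ‖B x - B y‖ := real_inner_le_norm _ _

theorem continuous (hB : IsCocoercive β B) (hβ : 0 < β) : Continuous B :=
  (LipschitzWith.of_dist_le' fun x y ↦ by
    simpa only [dist_eq_norm] using hB.norm_sub_le hβ x y).continuous

theorem inner_le_of_mem_vipSolutions (hB : IsCocoercive β B) (hβ : 0 < β)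
    (hz : z ∈ vipSolutions B C) (ht : t ∈ C) (y : H) :
    ⟪B y, z - t⟫ ≤ ‖y - t‖ ^ 2 / (4 * β) := by
  have hyoung : ‖B y - B z‖ * ‖y - t‖ - β * ‖B y - B z‖ ^ 2 ≤ ‖y - t‖ ^ 2 / (4 * β) := by
    rw [le_div_iff₀ (by positivity)]
    linarith [sq_nonneg (‖y - t‖ - 2 * β * ‖B y - B z‖)]
  have hsplit : ⟪B y, z - t⟫ = ⟪B y - B z, y - t⟫ - ⟪y - z, B y - B z⟫ - ⟪B z, t - z⟫ := by
    rw [real_inner_comm _ (y - z)]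
    simp only [inner_sub_left, inner_sub_right]
    ring
  linarith [hz.2 t ht, hB y z, real_inner_le_norm (B y - B z) (y - t)]

end IsCocoercive

theorem mem_vipSolutions_of_forall_inner_nonneg (hB : Continuous B) (hC : Convex ℝ C)
    (hp : p ∈ C) (h : ∀ c ∈ C, 0 ≤ ⟪B c, c - p⟫) : p ∈ vipSolutions B C := by
  refine ⟨hp, fun y hy ↦ ?_⟩
  have hlim : Tendsto (fun s : ℝ ↦ ⟪B (p + s • (y - p)), y - p⟫) (nhdsWithin 0 (Set.Ioi 0))
      (nhds ⟪B p, y - p⟫) := by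
    have hcont : Continuous fun s : ℝ ↦ ⟪B (p + s • (y - p)), y - p⟫ := by fun_prop
    simpa using (hcont.tendsto 0).mono_left nhdsWithin_le_nhds
  refine ge_of_tendsto hlim ?_
  filter_upwards [Ioc_mem_nhdsGT one_pos] with s hs
  have hs_mem : p + s • (y - p) ∈ C := hC.add_smul_sub_mem hp hy ⟨hs.1.le, hs.2⟩
  refine nonneg_of_mul_nonneg_right ?_ hs.1
  simpa only [add_sub_cancel_left, real_inner_smul_right] using h _ hs_mem

theorem mem_vipSolutions_of_tendstoWeakly_of_tendsto_zero [CompleteSpace H] (hB : Continuous B)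
    (hBmono : ∀ x y, ⟪B x, y - x⟫ ≤ ⟪B y, y - x⟫) (hC : IsClosed C) (hC' : Convex ℝ C)
    {ι : Type*} {l : Filter ι} [l.NeBot] {t r : ι → H} {R : ℝ} (hR : ∀ k, ‖t k‖ ≤ R)
    (ht : TendstoWeakly t l p) (hr : Tendsto r l (nhds 0)) (htC : ∀ k, t k ∈ C)
    (hrt : ∀ k, ∀ c ∈ C, ⟪r k, c - t k⟫ ≤ ⟪B (t k), c - t k⟫) : p ∈ vipSolutions B C := by
  refine mem_vipSolutions_of_forall_inner_nonneg hB hC'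
    (ht.mem_of_isClosed_of_convex hC hC' htC) fun c hc ↦ ?_
  have hleft : Tendsto (fun k ↦ ⟪r k, c - t k⟫) l (nhds 0) := by
    simpa [inner_sub_right, real_inner_comm] using
      (hr.inner (tendsto_const_nhds (x := c))).sub (ht.tendsto_inner hR hr)
  have hright : Tendsto (fun k ↦ ⟪B c, c - t k⟫) l (nhds ⟪B c, c - p⟫) := by
    simpa only [inner_sub_right, real_inner_comm] using tendsto_const_nhds.sub (ht (B c))
  exact le_of_tendsto_of_tendsto' hleft hright fun k ↦ (hrt k c hc).trans (hBmono _ _)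

namespace IsMetricProj

theorem norm_sub_le (hp : IsMetricProj V C y p) (ht : IsMetricProj V C y' t) {N : ℝ} (hN₀ : 0 ≤ N)
    (hN : ∀ u, ‖u‖ ^ 2 ≤ N * ⟪V u, u⟫) : ‖p - t‖ ≤ N * ‖V (y - y')‖ := by
  have hinner : ⟪V (p - t), p - t⟫ ≤ ⟪V (y - y'), p - t⟫ := by
    have hsum := add_nonpos (hp.2 t ht.1) (ht.2 p hp.1)
    simp only [map_sub, inner_sub_left, inner_sub_right] at hsum ⊢
    linarith
  rcases (norm_nonneg (p - t)).eq_or_lt with h | h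
  · rw [← h]; positivity
  refine le_of_mul_le_mul_right ?_ h
  calc ‖p - t‖ * ‖p - t‖ = ‖p - t‖ ^ 2 := (sq _).symm
    _ ≤ N * ⟪V (p - t), p - t⟫ := hN _
    _ ≤ N * (‖V (y - y')‖ * ‖p - t‖) := by
        gcongr; exact hinner.trans (real_inner_le_norm _ _)
    _ = N * ‖V (y - y')‖ * ‖p - t‖ := by ring

theorem isForwardBackwardPoint (hVU : Function.LeftInverse V U)
    (ht : IsMetricProj V C (y - γ • U (B y)) t) : IsForwardBackwardPoint V B C γ y t := by
  refine ⟨ht.1, fun z hz ↦ ?_⟩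
  have h := ht.2 z hz
  rw [sub_right_comm, map_sub, map_smul, hVU, inner_sub_left, real_inner_smul_left] at h
  linarith

end IsMetricProj

theorem IsForwardBackwardPoint.inner_relaxation_add_le (hV : V.IsPositive)
    {N lam : ℝ} (hN : ∀ u, ‖u‖ ^ 2 ≤ N * ⟪V u, u⟫) (hB : IsCocoercive β B) (hβ : 0 < β)
    (hγ : 0 ≤ γ) (hlam : 0 ≤ lam) (ht : IsForwardBackwardPoint V B C γ y t)
    (hz : z ∈ vipSolutions B C) :
    ⟪V (y - z + lam • (t - y)), y - z + lam • (t - y)⟫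
        + lam * (2 - γ * N / (2 * β) - lam) * ⟪V (y - t), y - t⟫
      ≤ ⟪V (y - z), y - z⟫ := by
  have hinner : ⟪V (y - t), z - t⟫ ≤ γ * N / (4 * β) * ⟪V (y - t), y - t⟫ :=
    calc ⟪V (y - t), z - t⟫ ≤ γ * ⟪B y, z - t⟫ := ht.2 z hz.1
      _ ≤ γ * (‖y - t‖ ^ 2 / (4 * β)) := by
        gcongr; exact hB.inner_le_of_mem_vipSolutions hβ hz ht.1 y
      _ ≤ γ * (N * ⟪V (y - t), y - t⟫ / (4 * β)) := by gcongr; exact hN _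
      _ = γ * N / (4 * β) * ⟪V (y - t), y - t⟫ := by ring
  have hcross : ⟪V (y - z), t - y⟫ = ⟪V (y - t), z - t⟫ - ⟪V (y - t), y - t⟫ := by
    rw [hV.inner_left_eq_inner_right, ← inner_sub_right, real_inner_comm, ← neg_sub y t, map_neg,
      inner_neg_left, ← inner_neg_right]
    congr 1
    abel
  have hquad : ⟪V (t - y), t - y⟫ = ⟪V (y - t), y - t⟫ := by
    rw [← neg_sub y t, map_neg, inner_neg_neg]
  rw [inner_apply_add_smul hV, hcross, hquad]
  have hscaled := mul_le_mul_of_nonneg_left hinner (mul_nonneg zero_le_two hlam)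
  have hdouble : γ * N / (2 * β) = 2 * (γ * N / (4 * β)) := by ring
  rw [hdouble]
  linarith

end VariationalInequality

section ForwardBackward

variable {H : Type*} [NormedAddCommGroup H] [InnerProductSpace ℝ H]

/-- `x` is an inexact relaxed forward-backward sequence for `VIP(B, C)`: it follows the relaxed
steps through the exact forward-backward points `t k` up to absolutely summable errors. -/
structure IsInexactForwardBackward (V : ℕ → H →L[ℝ] H) (B : H → H) (C : Set H) (γ lam : ℕ → ℝ)
    (x t : ℕ → H) : Prop where
  isForwardBackwardPoint : ∀ k, IsForwardBackwardPoint (V k) B C (γ k) (x k) (t k)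
  summable_error : Summable fun k ↦ ‖x (k + 1) - (x k + lam k • (t k - x k))‖

namespace IsInexactForwardBackward

variable {V : ℕ → H →L[ℝ] H} {M μ β lamlb τ γlb : ℝ} {η γ lam N : ℕ → ℝ} {B : H → H} {C : Set H}
  {x t : ℕ → H}

theorem exists_tendsto_and_tendsto_sub (h : IsInexactForwardBackward V B C γ lam x t)
    (hV : IsVariableMetric V M μ η) (hN : ∀ k u, ‖u‖ ^ 2 ≤ N k * ⟪V k u, u⟫)
    (hB : IsCocoercive β B) (hβ : 0 < β) (hγ : ∀ k, 0 ≤ γ k) (hlamlb : 0 < lamlb) (hτ : 0 < τ)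
    (hlam : ∀ k, lamlb ≤ lam k) (hlam' : ∀ k, lam k ≤ 2 - γ k * N k / (2 * β) - τ)
    {z : H} (hz : z ∈ vipSolutions B C) :
    (∃ l, Tendsto (fun k ↦ ⟪V k (x k - z), x k - z⟫) atTop (nhds l)) ∧
      Tendsto (fun k ↦ x k - t k) atTop (nhds 0) := by
  have hres (k : ℕ) : 0 ≤ ⟪V k (x k - t k), x k - t k⟫ := (hV.isPositive k).inner_nonneg_left _
  obtain ⟨hlim, hsum⟩ := hV.exists_tendsto_and_summable
    (y := fun k ↦ x k - z) (v := fun k ↦ x k - z + lam k • (t k - x k))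
    (d := fun k ↦ lamlb * τ * ⟪V k (x k - t k), x k - t k⟫)
    (fun k ↦ mul_nonneg (by positivity) (hres k)) h.summable_error (fun k ↦ by abel) fun k ↦ by
      refine le_trans ?_ ((h.isForwardBackwardPoint k).inner_relaxation_add_le (hV.isPositive k)
        (hN k) hB hβ (hγ k) (hlamlb.le.trans (hlam k)) hz)
      gcongr
      exacts [hres k, hlamlb.le.trans (hlam k), hlam k, by linarith [hlam' k]]
  refine ⟨hlim, hV.tendsto_zero ?_⟩
  exact ((summable_mul_left_iff (by positivity)).1 hsum).tendsto_atTop_zero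

theorem mem_vipSolutions_of_tendstoWeakly [CompleteSpace H]
    (h : IsInexactForwardBackward V B C γ lam x t) (hM : ∀ k, ‖V k‖ ≤ M) (hB : IsCocoercive β B)
    (hβ : 0 < β) (hC : IsClosed C) (hC' : Convex ℝ C) (hγlb : 0 < γlb) (hγ : ∀ k, γlb ≤ γ k)
    {R : ℝ} (hR : ∀ k, ‖x k‖ ≤ R) (hxt : Tendsto (fun k ↦ x k - t k) atTop (nhds 0))
    {F : Filter ℕ} [F.NeBot] (hF : F ≤ atTop) {p : H} (hxp : TendstoWeakly x F p) :
    p ∈ vipSolutions B C := by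
  have hxtF := hxt.mono_left hF
  obtain ⟨D, hD⟩ := hxt.norm.bddAbove_range
  have htD (k : ℕ) : ‖t k‖ ≤ R + D := by
    have := norm_sub_norm_le (t k) (x k)
    rw [norm_sub_rev] at this
    linarith [hR k, hD ⟨k, rfl⟩]
  let r (k : ℕ) : H := (γ k)⁻¹ • V k (x k - t k) + (B (t k) - B (x k))
  have hr_norm (k : ℕ) : ‖r k‖ ≤ (γlb⁻¹ * M + β⁻¹) * ‖x k - t k‖ := by
    have hγk : 0 < γ k := hγlb.trans_le (hγ k)
    calc ‖r k‖ ≤ ‖(γ k)⁻¹ • V k (x k - t k)‖ + ‖B (t k) - B (x k)‖ := norm_add_le _ _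
      _ ≤ γlb⁻¹ * (M * ‖x k - t k‖) + β⁻¹ * ‖x k - t k‖ := by
        rw [norm_smul, norm_inv, Real.norm_of_nonneg hγk.le]
        gcongr
        · exact hγ k
        · exact (V k).le_of_opNorm_le (hM k) _
        · simpa only [norm_sub_rev] using hB.norm_sub_le hβ (t k) (x k)
      _ = (γlb⁻¹ * M + β⁻¹) * ‖x k - t k‖ := by ring
  have hr : Tendsto r F (nhds 0) :=
    squeeze_zero_norm hr_norm (by simpa using hxtF.norm.const_mul (γlb⁻¹ * M + β⁻¹))
  refine mem_vipSolutions_of_tendstoWeakly_of_tendsto_zero (hB.continuous hβ)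
    (hB.inner_le_inner hβ.le) hC hC' htD (hxp.of_tendsto_sub hxtF) hr
    (fun k ↦ (h.isForwardBackwardPoint k).1) fun k c hc ↦ ?_
  have hstep := (h.isForwardBackwardPoint k).2 c hc
  rw [← inv_mul_le_iff₀ (hγlb.trans_le (hγ k))] at hstep
  simp only [r, inner_add_left, inner_sub_left, real_inner_smul_left]
  linarith

theorem exists_tendstoWeakly [CompleteSpace H]
    (h : IsInexactForwardBackward V B C γ lam x t) (hV : IsVariableMetric V M μ η)
    (hN : ∀ k u, ‖u‖ ^ 2 ≤ N k * ⟪V k u, u⟫) (hB : IsCocoercive β B) (hβ : 0 < β)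
    (hC : IsClosed C) (hC' : Convex ℝ C) (hγlb : 0 < γlb) (hγ : ∀ k, γlb ≤ γ k)
    (hlamlb : 0 < lamlb) (hτ : 0 < τ) (hlam : ∀ k, lamlb ≤ lam k)
    (hlam' : ∀ k, lam k ≤ 2 - γ k * N k / (2 * β) - τ) (hΩ : (vipSolutions B C).Nonempty) :
    ∃ p ∈ vipSolutions B C, TendstoWeakly x atTop p := by
  have hfejer {z : H} (hz : z ∈ vipSolutions B C) := h.exists_tendsto_and_tendsto_sub hV hN hB hβ
    (fun k ↦ hγlb.le.trans (hγ k)) hlamlb hτ hlam hlam' hz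
  obtain ⟨z, hz⟩ := hΩ
  obtain ⟨⟨_, hlim⟩, hxt⟩ := hfejer hz
  obtain ⟨R, hR⟩ := hV.exists_norm_le hlim
  exact hV.exists_mem_tendstoWeakly ⟨z, hz⟩ (fun z hz ↦ (hfejer hz).1) fun F p hF hp ↦
    h.mem_vipSolutions_of_tendstoWeakly hV.norm_le hB hβ hC hC' hγlb hγ hR hxt hF hp

end IsInexactForwardBackward

theorem isInexactForwardBackward_of_isMetricProj {U V : ℕ → H →L[ℝ] H} {B : H → H} {C : Set H}
    {γ lam : ℕ → ℝ} {P : ℕ → H → H} {a b x : ℕ → H} {K : ℝ}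
    (hVU : ∀ k, Function.LeftInverse (V k) (U k))
    (hUnorm : ∀ k u, ‖u‖ ^ 2 ≤ ‖U k‖ * ⟪V k u, u⟫) (hP : ∀ k y, IsMetricProj (V k) C y (P k y))
    (hγ : ∀ k, 0 ≤ γ k) (hK : ∀ k, γ k * ‖U k‖ ≤ K) (hlam : ∀ k, 0 ≤ lam k)
    (ha : Summable fun k ↦ lam k * ‖a k‖) (hb : Summable fun k ↦ lam k * ‖b k‖)
    (hx : ∀ k, x (k + 1) =
      x k + lam k • (P k (x k - γ k • U k (B (x k) + b k)) + a k - x k)) :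
    IsInexactForwardBackward V B C γ lam x fun k ↦ P k (x k - γ k • U k (B (x k))) where
  isForwardBackwardPoint k := (hP k _).isForwardBackwardPoint (hVU k)
  summable_error := by
    refine .of_nonneg_of_le (fun _ ↦ norm_nonneg _) (fun k ↦ ?_) ((hb.mul_left K).add ha)
    set s := P k (x k - γ k • U k (B (x k) + b k)) with hs
    set t := P k (x k - γ k • U k (B (x k)))
    have hst : ‖s - t‖ ≤ K * ‖b k‖ :=
      calc ‖s - t‖ ≤ ‖U k‖ * ‖V k (x k - γ k • U k (B (x k) + b k)
              - (x k - γ k • U k (B (x k))))‖ :=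
            (hP k _).norm_sub_le (hP k _) (norm_nonneg _) (hUnorm k)
        _ = γ k * ‖U k‖ * ‖b k‖ := by
            rw [sub_sub_sub_cancel_left, ← smul_sub, ← map_sub, map_smul, hVU k, norm_smul,
              sub_add_cancel_left, norm_neg, Real.norm_of_nonneg (hγ k)]
            ring
        _ ≤ K * ‖b k‖ := by gcongr; exact hK k
    calc ‖x (k + 1) - (x k + lam k • (t - x k))‖ = ‖lam k • (s - t + a k)‖ := by
          rw [hx, ← hs, add_sub_add_left_eq_sub, ← smul_sub]
          congr 2
          abel
      _ ≤ lam k * (K * ‖b k‖ + ‖a k‖) := by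
          rw [norm_smul, Real.norm_of_nonneg (hlam k)]
          exact mul_le_mul_of_nonneg_left ((norm_add_le _ _).trans (by gcongr)) (hlam k)
      _ = K * (lam k * ‖b k‖) + lam k * ‖a k‖ := by ring

end ForwardBackward

theorem one_div_two_mul_div_four_mul_sub {β : ℝ} (hβ : β ≠ 0) (c : ℝ) :
    1 / (2 * β / (4 * β - c)) = 2 - c / (2 * β) := by
  rw [one_div_div, sub_div, mul_div_mul_right _ _ hβ]
  norm_num

theorem variable_metric_vip_weak_convergence_general
    {H : Type*} [NormedAddCommGroup H] [InnerProductSpace ℝ H] [CompleteSpace H]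
    {C : Set H} (hCclosed : IsClosed C) (hCconv : Convex ℝ C)
    {β : ℝ} (hβ : 0 < β) {B : H → H} (hB : IsCocoercive β B) (hΩ : (vipSolutions B C).Nonempty)
    {α : ℝ} (hα : 0 < α) {U V : ℕ → H →L[ℝ] H} (hU : ∀ k, IsSelfAdjoint (U k))
    (hUpos : ∀ k u, α * ‖u‖ ^ 2 ≤ ⟪U k u, u⟫) (hVU : ∀ k, Function.LeftInverse (V k) (U k))
    (hUV : ∀ k, Function.RightInverse (V k) (U k))
    {η : ℕ → ℝ} (hη₀ : ∀ k, 0 ≤ η k) (hη : Summable η)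
    (hUmono : ∀ k u, ⟪U k u, u⟫ ≤ (1 + η k) * ⟪U (k + 1) u, u⟫)
    {γ lam : ℕ → ℝ} {lamlb τ γlb : ℝ} (hlamlb : 0 < lamlb) (hτ : 0 < τ) (hγlb : 0 < γlb)
    (hlam : ∀ k, lamlb ≤ lam k) (hlam' : ∀ k, lam k ≤ 2 - γ k * ‖U k‖ / (2 * β) - τ)
    (hγ : ∀ k, γlb ≤ γ k) {a b : ℕ → H}
    (ha : Summable fun k ↦ lam k * ‖a k‖) (hb : Summable fun k ↦ lam k * ‖b k‖)
    {P : ℕ → H → H} (hP : ∀ k y, IsMetricProj (V k) C y (P k y)) {x : ℕ → H}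
    (hx : ∀ k, x (k + 1) =
      x k + lam k • (P k (x k - γ k • U k (B (x k) + b k)) + a k - x k)) :
    ∃ p ∈ vipSolutions B C, TendstoWeakly x atTop p := by
  have hUpos' (k : ℕ) : (U k).IsPositive :=
    (ContinuousLinearMap.isPositive_iff _).2 ⟨(hU k).isSymmetric,
      fun u ↦ (by positivity : 0 ≤ α * ‖u‖ ^ 2).trans (hUpos k u)⟩
  have hγU (k : ℕ) : γ k * ‖U k‖ ≤ 4 * β := by
    have h : γ k * ‖U k‖ / (2 * β) ≤ 2 := by linarith [hlam k, hlam' k]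
    rw [div_le_iff₀ (by positivity)] at h
    linarith
  have hUnorm (k : ℕ) : ‖U k‖ ≤ 4 * β / γlb := by
    rw [le_div_iff₀' hγlb]
    exact (mul_le_mul_of_nonneg_right (hγ k) (norm_nonneg _)).trans (hγU k)
  have hN (k : ℕ) := norm_sq_le_opNorm_mul_inner_of_rightInverse (hUpos' k) (hUV k)
  exact (isInexactForwardBackward_of_isMetricProj hVU hN hP (fun k ↦ hγlb.le.trans (hγ k)) hγU
    (fun k ↦ hlamlb.le.trans (hlam k)) ha hb hx).exists_tendstoWeakly
    (isVariableMetric_of_rightInverse hα hUpos' hUpos hUV hUnorm hη₀ hη hUmono) hN hB hβ hCclosed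
    hCconv hγlb hγ hlamlb hτ hlam hlam' hΩ

/-- weak convergence of the variable metric projected forward-backward
algorithm for the variational inequality problem. -/
theorem variable_metric_vip_weak_convergence
    {H : Type*} [NormedAddCommGroup H] [InnerProductSpace ℝ H] [CompleteSpace H]
    (C : Set H) (hCne : C.Nonempty) (hCclosed : IsClosed C) (hCconv : Convex ℝ C)
    (β : ℝ) (hβ : 0 < β) (B : H → H)
    (hB : ∀ x y : H, ⟪x - y, B x - B y⟫ ≥ β * ‖B x - B y‖ ^ 2)
    (hΩ : {xs : H | xs ∈ C ∧ ∀ y ∈ C, ⟪B xs, y - xs⟫ ≥ 0}.Nonempty)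
    (α : ℝ) (hα : 0 < α) (μ : ℝ) (hμ : 0 < μ)
    (U V : ℕ → H →L[ℝ] H)
    (hU : ∀ k, IsSelfAdjoint (U k))
    (hUpos : ∀ k, ∀ z : H, ⟪U k z, z⟫ ≥ α * ‖z‖ ^ 2)
    (hV : ∀ k, IsSelfAdjoint (V k))
    (hVU : ∀ k, (V k).comp (U k) = ContinuousLinearMap.id ℝ H)
    (hUV : ∀ k, (U k).comp (V k) = ContinuousLinearMap.id ℝ H)
    (hUnorm : ∀ k, ‖U k‖ ≤ μ)
    (η : ℕ → ℝ) (hη0 : ∀ k, 0 ≤ η k) (hηsum : Summable η)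
    (hUmono : ∀ k, ∀ z : H, (1 + η k) * ⟪U (k + 1) z, z⟫ ≥ ⟪U k z, z⟫)
    (γ lam αk : ℕ → ℝ)
    (hγ : ∀ k, 0 < γ k ∧ γ k < 2 * β / ‖U k‖)
    (hαk : ∀ k, αk k = 2 * β / (4 * β - γ k * ‖U k‖))
    (lamlb τ γlb : ℝ) (hlamlb : 0 < lamlb) (hτ : 0 < τ) (hγlb : 0 < γlb)
    (hlam : ∀ k, lamlb ≤ lam k ∧ lam k ≤ 1 / αk k - τ)
    (hγ' : ∀ k, γlb ≤ γ k)
    (a b : ℕ → H)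
    (ha : Summable (fun k => lam k * ‖a k‖))
    (hb : Summable (fun k => lam k * ‖b k‖))
    (P : ℕ → H → H)
    (hPmem : ∀ k, ∀ y : H, P k y ∈ C)
    (hPproj : ∀ k, ∀ y : H, ∀ z ∈ C, ⟪V k (y - P k y), z - P k y⟫ ≤ 0)
    (x : ℕ → H)
    (hx : ∀ k, x (k + 1) =
      x k + lam k • (P k (x k - γ k • U k (B (x k) + b k)) + a k - x k)) :
    ∃ p ∈ {xs : H | xs ∈ C ∧ ∀ y ∈ C, ⟪B xs, y - xs⟫ ≥ 0},
      ∀ y : H, Tendsto (fun k => ⟪x k, y⟫) atTop (nhds ⟪p, y⟫) :=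
  variable_metric_vip_weak_convergence_general hCclosed hCconv hβ hB hΩ hα hU hUpos
    (fun k ↦ DFunLike.congr_fun (hVU k)) (fun k ↦ DFunLike.congr_fun (hUV k)) hη0 hηsum hUmono
    hlamlb hτ hγlb (fun k ↦ (hlam k).1)
    (fun k ↦ by simpa only [hαk, one_div_two_mul_div_four_mul_sub hβ.ne'] using (hlam k).2)
    hγ' ha hb (fun k y ↦ ⟨hPmem k y, hPproj k y⟩) hx
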